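/- arXiv:1705.02717 — 3 statements merged into one kernel-verified Lean document; each statement's English description precedes it below -/
import Mathlib

section
/- Let κ₁, κ₂, κ₃ be nonnegative integers with κ₁+κ₂+κ₃ = 2r even and κᵢ* := r − κᵢ ≥ 0 for i = 1,2,3. Then the self-pairing of the balanced invariant polynomial 𝐏 satisfies ⟨𝐏, 𝐏⟩ = (r+1)! · κ₁*! · κ₂*! · κ₃*! / (κ₁! · κ₂! · κ₃!). -/
open MvPolynomial Finset

/-- The variable `Xᵢ` in the polynomial ring `ℚ[X₁,Y₁,X₂,Y₂,X₃,Y₃]`. -/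
noncomputable def Xv (i : Fin 3) : MvPolynomial (Fin 3 × Fin 2) ℚ := MvPolynomial.X (i, 0)

/-- The variable `Yᵢ` in the polynomial ring `ℚ[X₁,Y₁,X₂,Y₂,X₃,Y₃]`. -/
noncomputable def Yv (i : Fin 3) : MvPolynomial (Fin 3 × Fin 2) ℚ := MvPolynomial.X (i, 1)

/-- The exponent multiset of the monomial `X₁^{e 0 0} Y₁^{e 0 1} X₂^{e 1 0} Y₂^{e 1 1}
X₃^{e 2 0} Y₃^{e 2 1}`. -/
noncomputable def expv (e : Fin 3 → Fin 2 → ℕ) : (Fin 3 × Fin 2) →₀ ℕ :=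
  Finsupp.equivFunOnFinite.symm fun q => e q.1 q.2

/-- The pairing `⟨P,Q⟩` on tri-homogeneous polynomials of multidegree `(κ₁, κ₂, κ₃)`. -/
noncomputable def triPair (κ₁ κ₂ κ₃ : ℕ) (P Q : MvPolynomial (Fin 3 × Fin 2) ℚ) : ℚ :=
  ∑ i₁ ∈ Finset.range (κ₁ + 1), ∑ i₂ ∈ Finset.range (κ₂ + 1), ∑ i₃ ∈ Finset.range (κ₃ + 1),
    (-1 : ℚ) ^ (i₁ + i₂ + i₃) *
      MvPolynomial.coeff (expv ![![i₁, κ₁ - i₁], ![i₂, κ₂ - i₂], ![i₃, κ₃ - i₃]]) P *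
      MvPolynomial.coeff (expv ![![κ₁ - i₁, i₁], ![κ₂ - i₂, i₂], ![κ₃ - i₃, i₃]]) Q /
      ((κ₁.choose i₁ : ℚ) * (κ₂.choose i₂ : ℚ) * (κ₃.choose i₃ : ℚ))

/-- The balanced invariant polynomial
`𝐏 = (X₁Y₂ − X₂Y₁)^{κ₃*} (X₃Y₁ − X₁Y₃)^{κ₂*} (X₃Y₂ − X₂Y₃)^{κ₁*}`. -/
noncomputable def bP (κ₁s κ₂s κ₃s : ℕ) : MvPolynomial (Fin 3 × Fin 2) ℚ :=
  (Xv 0 * Yv 1 - Xv 1 * Yv 0) ^ κ₃s * (Xv 2 * Yv 0 - Xv 0 * Yv 2) ^ κ₂s *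
    (Xv 2 * Yv 1 - Xv 1 * Yv 2) ^ κ₁s


/-! Up to the factor `κ₁! κ₂! κ₃!`, the number `⟨P, Q⟩` is the Fischer pairing of `P` with the image
of `Q` under the substitution `Xᵢ ↦ Yᵢ, Yᵢ ↦ −Xᵢ`. This substitution lies in `SL₂`, so it fixes
every bracket `[i j] = XᵢYⱼ − XⱼYᵢ` and hence `𝐏`; what remains is the Fischer norm of `𝐏`.
The Fischer pairing makes multiplication by `[i j]` adjoint to Cayley's operator
`Ωᵢⱼ = ∂_{Yⱼ}∂_{Xᵢ} − ∂_{Yᵢ}∂_{Xⱼ}`, and by Cayley's identity `Ωᵢⱼ` lowers the exponent `c` of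
`[i j]` in `[i j]^c [j k]^a [k i]^b` by one at the cost of the factor `c (a + b + c + 1)`. -/

section FischerPairing

variable {σ R : Type*} [CommSemiring R]

/-- The Fischer (apolar) pairing `∑ₘ m! · aₘ(P) · aₘ(Q)`, encoded as a bilinear map through its
values on monomials. -/
noncomputable def fischerPairing : MvPolynomial σ R →ₗ[R] MvPolynomial σ R →ₗ[R] R :=
  (basisMonomials σ R).constr R fun m => (m.prod fun _ n => (n.factorial : R)) • lcoeff R m

lemma fischerPairing_monomial (m : σ →₀ ℕ) (a : R) (Q : MvPolynomial σ R) :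
    fischerPairing (monomial m a) Q = a * ((m.prod fun _ n => (n.factorial : R)) * coeff m Q) := by
  have monomial_one : fischerPairing (monomial m (1 : R)) =
      (m.prod fun _ n => (n.factorial : R)) • lcoeff R m := by
    simpa only [fischerPairing, coe_basisMonomials] using (basisMonomials σ R).constr_basis R
      (fun m => (m.prod fun _ n => (n.factorial : R)) • lcoeff R m) m
  have monomial_eq_smul : monomial m a = a • monomial m (1 : R) := by
    rw [smul_monomial, smul_eq_mul, mul_one]
  rw [monomial_eq_smul, map_smul, monomial_one]
  rfl

lemma fischerPairing_eq_sum {s : Finset (σ →₀ ℕ)} {P : MvPolynomial σ R} (hP : P.support ⊆ s)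
    (Q : MvPolynomial σ R) :
    fischerPairing P Q =
      ∑ m ∈ s, coeff m P * ((m.prod fun _ n => (n.factorial : R)) * coeff m Q) := by
  have sum_support : fischerPairing P Q =
      ∑ m ∈ P.support, coeff m P * ((m.prod fun _ n => (n.factorial : R)) * coeff m Q) := by
    conv_lhs => rw [P.as_sum]
    simp only [map_sum, LinearMap.sum_apply, fischerPairing_monomial]
  rw [sum_support]
  refine Finset.sum_subset hP fun m _ hm => ?_
  rw [notMem_support_iff.mp hm, zero_mul]

lemma prod_factorial_add_single (m : σ →₀ ℕ) (v : σ) :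
    ((m + Finsupp.single v 1).prod fun _ n => (n.factorial : R)) =
      (m v + 1) * m.prod fun _ n => (n.factorial : R) := by
  have factor_out (l : σ →₀ ℕ) :=
    Finsupp.mul_prod_erase' l v (fun _ n => (n.factorial : R)) (by simp)
  rw [← factor_out m, ← factor_out (m + Finsupp.single v 1), Finsupp.erase_add,
    Finsupp.erase_single, add_zero, Finsupp.add_apply, Finsupp.single_eq_same,
    Nat.factorial_succ, Nat.cast_mul, Nat.cast_succ, mul_assoc]

lemma fischerPairing_X_mul (v : σ) (P Q : MvPolynomial σ R) :
    fischerPairing (X v * P) Q = fischerPairing P (pderiv v Q) := by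
  induction P using MvPolynomial.induction_on' with
  | monomial m a =>
    rw [X, monomial_mul, one_mul, add_comm, fischerPairing_monomial, fischerPairing_monomial,
      prod_factorial_add_single, coeff_pderiv]
    ring
  | add p q hp hq =>
    rw [mul_add, map_add, map_add, LinearMap.add_apply, LinearMap.add_apply, hp, hq]

end FischerPairing

section PairDegree

variable {ι : Type*} [DecidableEq ι]

/-- The weight for which the weighted degree is the degree in the pair `(Xₖ, Yₖ)`. -/
def pairWeight (k : ι) (v : ι × Fin 2) : ℕ := if v.1 = k then 1 else 0

lemma weight_pairWeight (k : ι) (m : ι × Fin 2 →₀ ℕ) :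
    Finsupp.weight (pairWeight k) m = m (k, 0) + m (k, 1) := by
  induction m using Finsupp.induction_linear with
  | zero => simp
  | add m n hm hn =>
    rw [map_add, hm, hn, Finsupp.add_apply, Finsupp.add_apply]
    ring
  | single v n =>
    obtain ⟨i, s⟩ := v
    fin_cases s <;> simp [pairWeight, Finsupp.single_apply, Finsupp.weight_apply]

lemma euler_pairWeight {R : Type*} [CommSemiring R] {P : MvPolynomial (ι × Fin 2) R} {i : ι} {d : ℕ}
    (hP : IsWeightedHomogeneous (pairWeight i) P d) :
    X (i, 0) * pderiv (i, 0) P + X (i, 1) * pderiv (i, 1) P = d • P := by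
  rw [P.as_sum]
  simp only [map_sum, mul_sum, X_mul_pderiv_monomial, smul_sum, ← sum_add_distrib, ← add_smul]
  refine sum_congr rfl fun m hm => ?_
  rw [← weight_pairWeight, hP (mem_support_iff.mp hm)]

end PairDegree

section Bracket

variable {ι R : Type*} [CommRing R]

/-- The bracket `[i j] = XᵢYⱼ − XⱼYᵢ`; the variables `Xᵢ` and `Yᵢ` have the indices `(i, 0)` and
`(i, 1)`. -/
noncomputable def bracket (i j : ι) : MvPolynomial (ι × Fin 2) R :=
  X (i, 0) * X (j, 1) - X (j, 0) * X (i, 1)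

/-- Cayley's operator `Ωᵢⱼ = ∂_{Yⱼ}∂_{Xᵢ} − ∂_{Yᵢ}∂_{Xⱼ}`. -/
noncomputable def cayleyOmega (i j : ι) (P : MvPolynomial (ι × Fin 2) R) :
    MvPolynomial (ι × Fin 2) R :=
  pderiv (j, 1) (pderiv (i, 0) P) - pderiv (i, 1) (pderiv (j, 0) P)

/-- The bracket monomial `[i j]^c [j k]^a [k i]^b`, which is `𝐏` up to sign. Each of `a b c` stands
at the position of the index missing from its bracket. -/
noncomputable def bracketProduct (i j k : ι) (a b c : ℕ) : MvPolynomial (ι × Fin 2) R :=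
  bracket i j ^ c * bracket j k ^ a * bracket k i ^ b

/-- The substitution `Xᵢ ↦ Yᵢ, Yᵢ ↦ −Xᵢ`, that is, the action of the Weyl element of `SL₂`. -/
noncomputable def weylTwist : MvPolynomial (ι × Fin 2) R →ₐ[R] MvPolynomial (ι × Fin 2) R :=
  aeval fun v => ![X (v.1, 1), -X (v.1, 0)] v.2

/-- The exchange of the indices of `Xᵢ` and `Yᵢ`. -/
def pairSwap : ι × Fin 2 ≃ ι × Fin 2 := (Equiv.refl ι).prodCongr (Equiv.swap 0 1)

lemma bracket_swap (i j : ι) : (bracket j i : MvPolynomial (ι × Fin 2) R) = -bracket i j := by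
  rw [bracket, bracket, neg_sub]

lemma bracketProduct_rotate (i j k : ι) (a b c : ℕ) :
    (bracketProduct i j k a b c : MvPolynomial (ι × Fin 2) R) = bracketProduct j k i b c a := by
  unfold bracketProduct
  ring

lemma bracketProduct_succ (i j k : ι) (a b c : ℕ) :
    (bracketProduct i j k a b (c + 1) : MvPolynomial (ι × Fin 2) R) =
      bracket i j * bracketProduct i j k a b c := by
  unfold bracketProduct
  ring

lemma fischerPairing_bracket_mul (i j : ι) (P Q : MvPolynomial (ι × Fin 2) R) :
    fischerPairing (bracket i j * P) Q = fischerPairing P (cayleyOmega i j Q) := by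
  simp only [bracket, cayleyOmega, sub_mul, mul_assoc, map_sub, LinearMap.sub_apply,
    fischerPairing_X_mul]

lemma weylTwist_bracket (i j : ι) :
    weylTwist (bracket i j : MvPolynomial (ι × Fin 2) R) = bracket i j := by
  simp only [weylTwist, bracket, map_sub, map_mul, aeval_X, Matrix.cons_val_zero,
    Matrix.cons_val_one]
  ring

lemma weylTwist_monomial (m : ι × Fin 2 →₀ ℕ) (a : R) :
    weylTwist (monomial m a) = monomial (m.equivMapDomain pairSwap)
      ((m.prod fun v n => (![1, -1] v.2 : R) ^ n) * a) := by
  have image_X (v : ι × Fin 2) : (![X (v.1, 1), -X (v.1, 0)] v.2 : MvPolynomial (ι × Fin 2) R) =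
      C (![1, -1] v.2) * X (pairSwap v) := by
    obtain ⟨i, l⟩ := v
    fin_cases l <;> simp [pairSwap]
  rw [weylTwist, aeval_monomial, monomial_eq, Finsupp.prod_equivMapDomain, C_mul, map_finsuppProd,
    algebraMap_eq]
  simp only [image_X, mul_pow, Finsupp.prod_mul, C_pow]
  ring

lemma coeff_weylTwist (m : ι × Fin 2 →₀ ℕ) (P : MvPolynomial (ι × Fin 2) R) :
    coeff (m.equivMapDomain pairSwap) (weylTwist P) =
      (m.prod fun v n => (![1, -1] v.2 : R) ^ n) * coeff m P := by
  classical
  induction P using MvPolynomial.induction_on' with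
  | monomial l a =>
    have equivMapDomain_inj :
        l.equivMapDomain pairSwap = m.equivMapDomain pairSwap ↔ l = m :=
      (Finsupp.equivCongrLeft pairSwap).injective.eq_iff
    simp only [weylTwist_monomial, coeff_monomial, equivMapDomain_inj, mul_ite, mul_zero]
    split_ifs with hlm
    · rw [hlm]
    · rfl
  | add p q hp hq => rw [map_add, coeff_add, coeff_add, hp, hq, mul_add]

variable [DecidableEq ι]

lemma isWeightedHomogeneous_bracket (i j k : ι) :
    IsWeightedHomogeneous (pairWeight k) (bracket i j : MvPolynomial (ι × Fin 2) R)
      ((if i = k then 1 else 0) + (if j = k then 1 else 0)) := by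
  have homogeneous_X (v : ι × Fin 2) := isWeightedHomogeneous_X R (pairWeight k) v
  refine Submodule.sub_mem (weightedHomogeneousSubmodule R (pairWeight k) _)
    ((homogeneous_X (i, 0)).mul (homogeneous_X (j, 1))) ?_
  rw [add_comm]
  exact (homogeneous_X (j, 0)).mul (homogeneous_X (i, 1))

lemma isWeightedHomogeneous_bracketProduct (i j k l : ι) (a b c : ℕ) :
    IsWeightedHomogeneous (pairWeight l) (bracketProduct i j k a b c : MvPolynomial (ι × Fin 2) R)
      ((if i = l then b + c else 0) + (if j = l then a + c else 0) +
        (if k = l then a + b else 0)) := by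
  have homogeneous_mul := (((isWeightedHomogeneous_bracket (R := R) i j l).pow c).mul
    ((isWeightedHomogeneous_bracket j k l).pow a)).mul
    ((isWeightedHomogeneous_bracket k i l).pow b)
  rw [bracketProduct]
  convert homogeneous_mul using 1
  split_ifs <;> simp only [smul_eq_mul] <;> ring

end Bracket

section CayleyIdentity

variable {ι R : Type*} [CommRing R] {i j k : ι}

lemma pderiv_bracket_of_ne (hi : i ≠ k) (hj : j ≠ k) (s : Fin 2) :
    pderiv (k, s) (bracket i j : MvPolynomial (ι × Fin 2) R) = 0 := by
  simp [bracket, hi, hj]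

lemma pderiv_fst_bracket_left (hij : i ≠ j) :
    pderiv (i, 0) (bracket i j : MvPolynomial (ι × Fin 2) R) = X (j, 1) := by
  simp [bracket, hij.symm]

lemma pderiv_snd_bracket_left (hij : i ≠ j) :
    pderiv (i, 1) (bracket i j : MvPolynomial (ι × Fin 2) R) = -X (j, 0) := by
  simp [bracket, hij.symm]

lemma pderiv_fst_bracket_right (hij : i ≠ j) :
    pderiv (j, 0) (bracket i j : MvPolynomial (ι × Fin 2) R) = -X (i, 1) := by
  rw [bracket_swap, map_neg, pderiv_fst_bracket_left hij.symm]

lemma pderiv_snd_bracket_right (hij : i ≠ j) :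
    pderiv (j, 1) (bracket i j : MvPolynomial (ι × Fin 2) R) = X (i, 0) := by
  rw [bracket_swap, map_neg, pderiv_snd_bracket_left hij.symm, neg_neg]

lemma cayleyOmega_bracket_pow_mul_bracket_pow (hij : i ≠ j) (hjk : j ≠ k) (hki : k ≠ i)
    (a b : ℕ) :
    cayleyOmega i j (bracket j k ^ a * bracket k i ^ b : MvPolynomial (ι × Fin 2) R) = 0 := by
  simp only [cayleyOmega, Derivation.leibniz, Derivation.leibniz_pow, smul_eq_mul, nsmul_eq_mul,
    pderiv_bracket_of_ne hij.symm hki, pderiv_bracket_of_ne hjk.symm hij,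
    pderiv_fst_bracket_left hjk, pderiv_snd_bracket_left hjk, pderiv_fst_bracket_right hki,
    pderiv_snd_bracket_right hki, pderiv_X_of_ne, ne_eq, Prod.mk.injEq, hjk.symm, hki, false_and,
    not_false_eq_true, Derivation.map_natCast, map_neg, mul_zero, zero_add, add_zero, neg_zero]
  ring

variable [DecidableEq ι] {P : MvPolynomial (ι × Fin 2) R} {d e : ℕ}

lemma cayleyOmega_bracket_mul (hij : i ≠ j) (hi : IsWeightedHomogeneous (pairWeight i) P d)
    (hj : IsWeightedHomogeneous (pairWeight j) P e) :
    cayleyOmega i j (bracket i j * P) = (d + e + 2) • P + bracket i j * cayleyOmega i j P := by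
  have euler_i := euler_pairWeight hi
  have euler_j := euler_pairWeight hj
  simp only [cayleyOmega, map_add, Derivation.leibniz, smul_eq_mul, nsmul_eq_mul,
    pderiv_fst_bracket_left hij, pderiv_snd_bracket_left hij, pderiv_fst_bracket_right hij,
    pderiv_snd_bracket_right hij, map_neg, pderiv_X_self]
  push_cast
  linear_combination euler_i + euler_j

lemma cayleyOmega_bracket_pow_succ_mul (hij : i ≠ j)
    (hi : IsWeightedHomogeneous (pairWeight i) P d)
    (hj : IsWeightedHomogeneous (pairWeight j) P e) (hP : cayleyOmega i j P = 0) (n : ℕ) :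
    cayleyOmega i j (bracket i j ^ (n + 1) * P) =
      ((n + 1) * (d + e + n + 2)) • (bracket i j ^ n * P) := by
  induction n with
  | zero =>
    rw [zero_add, pow_one, cayleyOmega_bracket_mul hij hi hj, hP]
    simp
  | succ n ih =>
    have hi' := ((isWeightedHomogeneous_bracket i j i).pow (n + 1)).mul hi
    have hj' := ((isWeightedHomogeneous_bracket i j j).pow (n + 1)).mul hj
    rw [pow_succ' _ (n + 1), mul_assoc, cayleyOmega_bracket_mul hij hi' hj', ih]
    simp only [if_pos, if_neg hij, if_neg hij.symm, nsmul_eq_mul, smul_eq_mul]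
    push_cast
    ring

end CayleyIdentity

section FischerNorm

variable {ι R : Type*} [CommRing R] {i j k : ι}

lemma cayleyOmega_bracketProduct_succ (hij : i ≠ j) (hjk : j ≠ k) (hki : k ≠ i) (a b c : ℕ) :
    cayleyOmega i j (bracketProduct i j k a b (c + 1) : MvPolynomial (ι × Fin 2) R) =
      ((c + 1) * (a + b + c + 2)) • bracketProduct i j k a b c := by
  classical
  have degree_i : IsWeightedHomogeneous (pairWeight i)
      (bracketProduct i j k a b 0 : MvPolynomial (ι × Fin 2) R) b := by
    simpa [hij.symm, hki] using isWeightedHomogeneous_bracketProduct (R := R) i j k i a b 0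
  have degree_j : IsWeightedHomogeneous (pairWeight j)
      (bracketProduct i j k a b 0 : MvPolynomial (ι × Fin 2) R) a := by
    simpa [hij, hjk.symm] using isWeightedHomogeneous_bracketProduct (R := R) i j k j a b 0
  have omega_eq_zero :
      cayleyOmega i j (bracketProduct i j k a b 0 : MvPolynomial (ι × Fin 2) R) = 0 := by
    simpa [bracketProduct] using cayleyOmega_bracket_pow_mul_bracket_pow (R := R) hij hjk hki a b
  have factor_out (n : ℕ) : (bracketProduct i j k a b n : MvPolynomial (ι × Fin 2) R) =
      bracket i j ^ n * bracketProduct i j k a b 0 := by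
    unfold bracketProduct
    ring
  rw [factor_out (c + 1), factor_out c,
    cayleyOmega_bracket_pow_succ_mul hij degree_i degree_j omega_eq_zero, add_comm b a]

lemma fischerPairing_bracketProduct_self_of_zero (hij : i ≠ j) (hjk : j ≠ k) (hki : k ≠ i)
    {a b : ℕ} (h : fischerPairing (bracketProduct i j k a b 0) (bracketProduct i j k a b 0) =
      ((a + b + 1).factorial : R) * a.factorial * b.factorial) (c : ℕ) :
    fischerPairing (bracketProduct i j k a b c) (bracketProduct i j k a b c) =
      ((a + b + c + 1).factorial : R) * a.factorial * b.factorial * c.factorial := by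
  induction c with
  | zero => simpa using h
  | succ c ih =>
    conv_lhs => enter [1]; rw [bracketProduct_succ]
    rw [fischerPairing_bracket_mul, cayleyOmega_bracketProduct_succ hij hjk hki, map_nsmul, ih,
      ← add_assoc (a + b), Nat.factorial_succ (a + b + c + 1), Nat.factorial_succ c, nsmul_eq_mul]
    push_cast
    ring

lemma fischerPairing_bracketProduct_self (hij : i ≠ j) (hjk : j ≠ k) (hki : k ≠ i)
    (a b c : ℕ) :
    fischerPairing (bracketProduct i j k a b c) (bracketProduct i j k a b c) =
      ((a + b + c + 1).factorial : R) * a.factorial * b.factorial * c.factorial := by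
  -- Rotating the indices makes each of `a`, `b`, `c` in turn the exponent of the first bracket.
  have only_a := fischerPairing_bracketProduct_self_of_zero (R := R) hjk hki hij (a := 0) (b := 0)
    (by simpa [bracketProduct] using fischerPairing_monomial (R := R) (0 : ι × Fin 2 →₀ ℕ) 1 1) a
  rw [bracketProduct_rotate] at only_a
  have only_a_b := fischerPairing_bracketProduct_self_of_zero (R := R) hki hij hjk (a := 0) (b := a)
    (by simpa using only_a) b
  rw [bracketProduct_rotate] at only_a_b
  exact fischerPairing_bracketProduct_self_of_zero hij hjk hki (by simpa using only_a_b) c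

end FischerNorm

section TriPairing

variable {R : Type*}

lemma prod_expv {M : Type*} [CommMonoid M] (e : Fin 3 → Fin 2 → ℕ) {g : Fin 3 × Fin 2 → ℕ → M}
    (hg : ∀ v, g v 0 = 1) : (expv e).prod g = ∏ i, ∏ s, g (i, s) (e i s) := by
  rw [Finsupp.prod_fintype _ _ hg, Fintype.prod_prod_type]
  rfl

lemma equivMapDomain_pairSwap_expv (x₁ y₁ x₂ y₂ x₃ y₃ : ℕ) :
    (expv ![![x₁, y₁], ![x₂, y₂], ![x₃, y₃]]).equivMapDomain pairSwap =
      expv ![![y₁, x₁], ![y₂, x₂], ![y₃, x₃]] := by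
  ext ⟨i, s⟩
  fin_cases i <;> fin_cases s <;> rfl

lemma coeff_expv_weylTwist [CommRing R] (x₁ y₁ x₂ y₂ x₃ y₃ : ℕ)
    (P : MvPolynomial (Fin 3 × Fin 2) R) :
    coeff (expv ![![x₁, y₁], ![x₂, y₂], ![x₃, y₃]]) (weylTwist P) =
      (-1) ^ (x₁ + x₂ + x₃) * coeff (expv ![![y₁, x₁], ![y₂, x₂], ![y₃, x₃]]) P := by
  rw [← equivMapDomain_pairSwap_expv, coeff_weylTwist, prod_expv _ fun _ => pow_zero _]
  simp [Fin.prod_univ_succ, pow_add, mul_assoc]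

lemma expv_injective (κ₁ κ₂ κ₃ : ℕ) : Function.Injective fun i : ℕ × ℕ × ℕ =>
    expv ![![i.1, κ₁ - i.1], ![i.2.1, κ₂ - i.2.1], ![i.2.2, κ₃ - i.2.2]] := by
  intro i i' h
  exact Prod.ext (DFunLike.congr_fun h (0, 0))
    (Prod.ext (DFunLike.congr_fun h (1, 0)) (DFunLike.congr_fun h (2, 0)))

lemma support_subset_image_expv [CommSemiring R] {κ₁ κ₂ κ₃ : ℕ}
    {P : MvPolynomial (Fin 3 × Fin 2) R}
    (hP : ∀ k, IsWeightedHomogeneous (pairWeight k) P (![κ₁, κ₂, κ₃] k)) :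
    P.support ⊆ (range (κ₁ + 1) ×ˢ range (κ₂ + 1) ×ˢ range (κ₃ + 1)).image fun i : ℕ × ℕ × ℕ =>
      expv ![![i.1, κ₁ - i.1], ![i.2.1, κ₂ - i.2.1], ![i.2.2, κ₃ - i.2.2]] := by
  intro m hm
  have degree (k : Fin 3) : m (k, 0) + m (k, 1) = ![κ₁, κ₂, κ₃] k := by
    rw [← weight_pairWeight, hP k (mem_support_iff.mp hm)]
  have degree₁ : m (0, 0) + m (0, 1) = κ₁ := degree 0
  have degree₂ : m (1, 0) + m (1, 1) = κ₂ := degree 1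
  have degree₃ : m (2, 0) + m (2, 1) = κ₃ := degree 2
  refine mem_image.mpr ⟨(m (0, 0), m (1, 0), m (2, 0)), ?_, ?_⟩
  · simp only [mem_product, mem_range]
    omega
  · ext ⟨i, s⟩
    fin_cases i <;> fin_cases s <;> simp [expv] <;> omega

lemma fischerPairing_eq_sum_range [CommSemiring R] {κ₁ κ₂ κ₃ : ℕ}
    {P : MvPolynomial (Fin 3 × Fin 2) R}
    (hP : ∀ k, IsWeightedHomogeneous (pairWeight k) P (![κ₁, κ₂, κ₃] k))
    (Q : MvPolynomial (Fin 3 × Fin 2) R) :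
    fischerPairing P Q = ∑ i₁ ∈ range (κ₁ + 1), ∑ i₂ ∈ range (κ₂ + 1), ∑ i₃ ∈ range (κ₃ + 1),
      coeff (expv ![![i₁, κ₁ - i₁], ![i₂, κ₂ - i₂], ![i₃, κ₃ - i₃]]) P *
        ((i₁.factorial * (κ₁ - i₁).factorial * (i₂.factorial * (κ₂ - i₂).factorial) *
          (i₃.factorial * (κ₃ - i₃).factorial) : ℕ) *
        coeff (expv ![![i₁, κ₁ - i₁], ![i₂, κ₂ - i₂], ![i₃, κ₃ - i₃]]) Q) := by
  rw [fischerPairing_eq_sum (support_subset_image_expv hP),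
    sum_image fun _ _ _ _ h => expv_injective κ₁ κ₂ κ₃ h]
  simp [sum_product, prod_expv, Fin.prod_univ_succ, mul_assoc]

lemma triPair_eq_fischerPairing {κ₁ κ₂ κ₃ : ℕ} {P : MvPolynomial (Fin 3 × Fin 2) ℚ}
    (hP : ∀ k, IsWeightedHomogeneous (pairWeight k) P (![κ₁, κ₂, κ₃] k))
    (Q : MvPolynomial (Fin 3 × Fin 2) ℚ) :
    triPair κ₁ κ₂ κ₃ P Q = fischerPairing P (weylTwist Q) /
      ((κ₁.factorial : ℚ) * κ₂.factorial * κ₃.factorial) := by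
  rw [fischerPairing_eq_sum_range hP, triPair]
  simp only [sum_div]
  refine sum_congr rfl fun i₁ h₁ => sum_congr rfl fun i₂ h₂ => sum_congr rfl fun i₃ h₃ => ?_
  rw [coeff_expv_weylTwist, Nat.cast_choose ℚ (mem_range_succ_iff.mp h₁),
    Nat.cast_choose ℚ (mem_range_succ_iff.mp h₂), Nat.cast_choose ℚ (mem_range_succ_iff.mp h₃)]
  push_cast
  field_simp

end TriPairing

section BalancedPolynomial

variable (a b c : ℕ)

lemma bP_eq_smul_bracketProduct : bP a b c = (-1 : ℚ) ^ a • bracketProduct 0 1 2 a b c := by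
  have bP_eq_brackets : bP a b c = bracket 0 1 ^ c * bracket 2 0 ^ b * bracket 2 1 ^ a := rfl
  rw [bP_eq_brackets, bracketProduct, bracket_swap 1 2, neg_pow, smul_eq_C_mul, C_pow, C_neg, C_1]
  ring

lemma isWeightedHomogeneous_bP (k : Fin 3) :
    IsWeightedHomogeneous (pairWeight k) (bP a b c) (![b + c, a + c, a + b] k) := by
  rw [bP_eq_smul_bracketProduct]
  refine Submodule.smul_mem (weightedHomogeneousSubmodule ℚ (pairWeight k) _) _ ?_
  convert! isWeightedHomogeneous_bracketProduct (R := ℚ) 0 1 2 k a b c using 1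
  fin_cases k <;> simp

lemma weylTwist_bP : weylTwist (bP a b c) = bP a b c := by
  simp only [bP_eq_smul_bracketProduct, bracketProduct, map_smul, map_mul, map_pow,
    weylTwist_bracket]

lemma fischerPairing_bP_self : fischerPairing (bP a b c) (bP a b c) =
    ((a + b + c + 1).factorial : ℚ) * a.factorial * b.factorial * c.factorial := by
  rw [bP_eq_smul_bracketProduct, map_smul, map_smul, LinearMap.smul_apply, smul_smul, ← mul_pow,
    neg_mul_neg, one_mul, one_pow, one_smul,
    fischerPairing_bracketProduct_self (by decide) (by decide) (by decide)]

lemma triPair_bP_self_of_exponents :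
    triPair (b + c) (a + c) (a + b) (bP a b c) (bP a b c) =
      ((a + b + c + 1).factorial : ℚ) * a.factorial * b.factorial * c.factorial /
        (((b + c).factorial : ℚ) * (a + c).factorial * (a + b).factorial) := by
  rw [triPair_eq_fischerPairing (isWeightedHomogeneous_bP a b c), weylTwist_bP,
    fischerPairing_bP_self]

end BalancedPolynomial

/-- The self-pairing of the balanced invariant polynomial:
`⟨𝐏, 𝐏⟩ = (r+1)!·κ₁*!·κ₂*!·κ₃*!/(κ₁!·κ₂!·κ₃!)`. -/
theorem triPair_bP_self (κ₁ κ₂ κ₃ r : ℕ) (hsum : κ₁ + κ₂ + κ₃ = 2 * r)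
    (h1 : κ₁ ≤ r) (h2 : κ₂ ≤ r) (h3 : κ₃ ≤ r) :
    triPair κ₁ κ₂ κ₃ (bP (r - κ₁) (r - κ₂) (r - κ₃)) (bP (r - κ₁) (r - κ₂) (r - κ₃)) =
      ((r + 1).factorial : ℚ) * (r - κ₁).factorial * (r - κ₂).factorial * (r - κ₃).factorial /
        ((κ₁.factorial : ℚ) * κ₂.factorial * κ₃.factorial) := by
  have hκ₁ : (r - κ₂) + (r - κ₃) = κ₁ := by omega
  have hκ₂ : (r - κ₁) + (r - κ₃) = κ₂ := by omega
  have hκ₃ : (r - κ₁) + (r - κ₂) = κ₃ := by omega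
  have self_pairing := triPair_bP_self_of_exponents (r - κ₁) (r - κ₂) (r - κ₃)
  rwa [hκ₁, hκ₂, hκ₃, Nat.add_sub_of_le h3] at self_pairing
end

section
/- For natural numbers a, b, r with a + b ≤ r, one has Σ_{j=0}^{a} (−1)^j · binom(a,j) · binom(b,j) / binom(r,j) = ((r−a)! · a! / r!) · binom(r−b, r−a−b), as an equality of rational numbers. (Note binom(r,j) > 0 for all 0 ≤ j ≤ a since a ≤ r.) -/
/-!
The identity is Chu-Vandermonde in disguise, and it holds with `r` and `b` replaced by arbitrary
elements `x` and `y` of a field of characteristic zero with `C(x, a) ≠ 0`. Trinomial revision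
`C(a, j) C(x, a) = C(x, j) C(x - j, a - j)` turns the `j`-th summand, multiplied by `C(x, a)`, into
`(-1) ^ j C(y, j) C(x - j, a - j)`. Upper negation rewrites `C(x - j, a - j)` as
`(-1) ^ (a - j) C(a - 1 - x, a - j)`, whose upper argument no longer depends on `j`, so that the
Chu-Vandermonde identity evaluates the sum to
`(-1) ^ a C(y + a - 1 - x, a) = C(x - y, a)`.
-/

open Finset

section BinomialRing

variable {R : Type*} [CommRing R] [BinomialRing R]

theorem ring_choose_eq_neg_one_pow_mul_choose (x : R) (n : ℕ) :
    Ring.choose x n = (-1) ^ n * Ring.choose (n - 1 - x) n := by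
  have upper_negation := Ring.choose_neg (-x) n
  rwa [neg_neg, Units.smul_def, zsmul_eq_mul, Int.coe_negOnePow_natCast, Int.cast_pow,
    Int.cast_neg, Int.cast_one, show -x + n - 1 = n - 1 - x by ring] at upper_negation

theorem ring_choose_sub_eq_sum_range (x y : R) (n : ℕ) :
    Ring.choose (x - y) n =
      ∑ j ∈ range (n + 1), (-1) ^ j * Ring.choose y j * Ring.choose (x - j) (n - j) := by
  calc Ring.choose (x - y) n
      = (-1) ^ n * Ring.choose (y + (n - 1 - x)) n := by
        rw [ring_choose_eq_neg_one_pow_mul_choose, show n - 1 - (x - y) = y + (n - 1 - x) by ring]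
    _ = ∑ j ∈ range (n + 1),
          (-1) ^ n * (Ring.choose y j * Ring.choose (n - 1 - x) (n - j)) := by
        rw [Ring.add_choose_eq n (Commute.all _ _), mul_sum,
          Nat.sum_antidiagonal_eq_sum_range_succ_mk]
    _ = _ := sum_congr rfl fun j hj ↦ by
        have hjn : j ≤ n := mem_range_succ_iff.mp hj
        rw [ring_choose_eq_neg_one_pow_mul_choose (x - j) (n - j), Nat.cast_sub hjn,
          show (n : R) - j - 1 - (x - j) = n - 1 - x by ring]
        nth_rw 1 [← Nat.add_sub_of_le hjn]
        ring

theorem ring_choose_ne_zero_of_le {x : R} {j n : ℕ} (hjn : j ≤ n) (hx : Ring.choose x n ≠ 0) :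
    Ring.choose x j ≠ 0 := by
  have := BinomialRing.toIsAddTorsionFree (R := R)
  intro hxj
  have revision := Ring.choose_smul_choose x hjn
  rw [hxj, zero_mul] at revision
  exact smul_ne_zero (Nat.choose_pos hjn).ne' hx revision

end BinomialRing

theorem alternating_rational_binomial_sum_general {K : Type*} [Field K] [BinomialRing K]
    (a : ℕ) (x y : K) (hx : Ring.choose x a ≠ 0) :
    ∑ j ∈ range (a + 1), (-1) ^ j * (a.choose j : K) * Ring.choose y j / Ring.choose x j =
      Ring.choose (x - y) a / Ring.choose x a := by
  rw [ring_choose_sub_eq_sum_range, sum_div]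
  refine sum_congr rfl fun j hj ↦ ?_
  have hja : j ≤ a := mem_range_succ_iff.mp hj
  have revision := Ring.choose_smul_choose x hja
  rw [nsmul_eq_mul] at revision
  rw [div_eq_div_iff (ring_choose_ne_zero_of_le hja hx) hx]
  linear_combination (-1) ^ j * Ring.choose y j * revision

theorem sum_neg_one_pow_mul_choose_mul_choose_div_choose (K : Type*) [Field K] [CharZero K]
    {a b r : ℕ} (ha : a ≤ r) (hb : b ≤ r) :
    ∑ j ∈ range (a + 1), (-1 : K) ^ j * (a.choose j : K) * (b.choose j : K) / (r.choose j : K) =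
      ((r - b).choose a : K) / (r.choose a : K) := by
  have hr : Ring.choose (r : K) a ≠ 0 := by
    rw [Ring.choose_natCast]
    exact_mod_cast (Nat.choose_pos ha).ne'
  simpa only [← Nat.cast_sub hb, Ring.choose_natCast] using
    alternating_rational_binomial_sum_general a (r : K) b hr

/-- The alternating rational binomial identity
`Σ_{j=0}^{a} (−1)^j · binom(a,j) · binom(b,j) / binom(r,j)
  = ((r−a)!·a!/r!) · binom(r−b, r−a−b)` for `a + b ≤ r`. -/
theorem alternating_rational_binomial_sum (a b r : ℕ) (h : a + b ≤ r) :
    ∑ j ∈ Finset.range (a + 1),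
        (-1 : ℚ) ^ j * (a.choose j : ℚ) * (b.choose j : ℚ) / (r.choose j : ℚ) =
      ((r - a).factorial : ℚ) * (a.factorial : ℚ) / (r.factorial : ℚ) *
        ((r - b).choose (r - a - b) : ℚ) := by
  have ha : a ≤ r := by lia
  rw [sum_neg_one_pow_mul_choose_mul_choose_div_choose ℚ ha (by lia),
    Nat.choose_symm_of_eq_add (show r - b = r - a - b + a by lia), Nat.cast_choose ℚ ha,
    div_div_eq_mul_div]
  ring
end

section
/- Let p be a prime, n a natural number, y₁, y₂ ∈ ℚ_p^× and x ∈ ℚ_p. The matrix [[y₂^{−1}y₁, y₂^{−1}x],[0,1]] belongs to Z·K_n if and only if p^{−n} ≤ |y₂^{−1}y₁|_p ≤ p^{n} and |x|_p² ≤ p^{n} · |y₁y₂|_p. -/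
open Matrix

/-- The maximal compact subgroup `K = GL₂(ℤ_p)`, viewed as the set of `2×2` matrices over
`ℚ_p` with entries in `ℤ_p` and determinant a `p`-adic unit. -/
def Kgp (p : ℕ) [Fact p.Prime] : Set (Matrix (Fin 2) (Fin 2) ℚ_[p]) :=
  {g | (∀ i j, ‖g i j‖ ≤ 1) ∧ ‖g.det‖ = 1}

/-- `K_n = ⋃_{i=0}^{n} K · diag(pⁱ, 1) · K`. -/
def Kn (p : ℕ) [Fact p.Prime] (n : ℕ) : Set (Matrix (Fin 2) (Fin 2) ℚ_[p]) :=
  {m | ∃ i ≤ n, ∃ k₁ ∈ Kgp p, ∃ k₂ ∈ Kgp p,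
    m = k₁ * Matrix.diagonal ![(p : ℚ_[p]) ^ i, 1] * k₂}

/-- `Z·K_n`: the set of nonzero scalar multiples of elements of `K_n`. -/
def ZKn (p : ℕ) [Fact p.Prime] (n : ℕ) : Set (Matrix (Fin 2) (Fin 2) ℚ_[p]) :=
  {m | ∃ z : ℚ_[p], z ≠ 0 ∧ ∃ g ∈ Kn p n, m = z • g}

/-!
An element of `K · diag(pⁱ, 1) · K` has integral entries and determinant of norm `p⁻ⁱ`, so every
`m ∈ Z·K_n` satisfies the homogeneous inequalities `|m i j|² ≤ pⁿ |det m|`. These characterize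
`Z·K_n` among invertible matrices: permuting rows and columns to move an entry of largest norm to
the lower right corner, and then scaling, brings `m` to the form `[[a, b], [c, 1]]` with `a`, `b`,
`c` integral. This factors as `[[1, b], [0, 1]] · diag(d, 1) · [[1, 0], [c, 1]]` with `d = a - bc`,
and the inequality for the entry `1` reads `p⁻ⁿ ≤ |d|`, so `d` is a unit times `pⁱ` with `i ≤ n`.
-/

section NormedRing

lemma norm_diagonal_apply_le_one {ι R : Type*} [DecidableEq ι] [SeminormedAddGroup R] {d : ι → R}
    (hd : ∀ i, ‖d i‖ ≤ 1) (i j : ι) : ‖Matrix.diagonal d i j‖ ≤ 1 := by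
  rw [Matrix.diagonal_apply]
  split_ifs
  · exact hd i
  · exact norm_zero.trans_le zero_le_one

variable {ι : Type*} [Fintype ι]

lemma norm_matrix_mul_apply_le_one {l k R : Type*} [NonUnitalSeminormedRing R]
    [IsUltrametricDist R] {A : Matrix l ι R} {B : Matrix ι k R} (hA : ∀ i j, ‖A i j‖ ≤ 1)
    (hB : ∀ i j, ‖B i j‖ ≤ 1) (i : l) (j : k) : ‖(A * B) i j‖ ≤ 1 := by
  rw [Matrix.mul_apply]
  exact IsUltrametricDist.norm_sum_le_of_forall_le_of_nonneg zero_le_one fun t _ ↦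
    (norm_mul_le _ _).trans (mul_le_one₀ (hA i t) (norm_nonneg _) (hB t j))

variable [DecidableEq ι] {R : Type*}

lemma norm_det_le_one [NormedCommRing R] [NormOneClass R] [IsUltrametricDist R]
    {A : Matrix ι ι R} (hA : ∀ i j, ‖A i j‖ ≤ 1) : ‖A.det‖ ≤ 1 := by
  rw [Matrix.det_apply]
  refine IsUltrametricDist.norm_sum_le_of_forall_le_of_nonneg zero_le_one fun σ _ ↦ ?_
  rw [norm_units_zsmul]
  exact (Finset.norm_prod_le _ _).trans
    (Finset.prod_le_one (fun _ _ ↦ norm_nonneg _) fun i _ ↦ hA (σ i) i)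

lemma norm_det_submatrix_perm [SeminormedCommRing R] (A : Matrix ι ι R)
    (σ τ : Equiv.Perm ι) : ‖(A.submatrix σ τ).det‖ = ‖A.det‖ := by
  have norm_sign_mul (ρ : Equiv.Perm ι) (r : R) : ‖((Equiv.Perm.sign ρ : ℤ) : R) * r‖ = ‖r‖ := by
    rw [← zsmul_eq_mul, ← Units.smul_def, norm_units_zsmul]
  calc ‖(A.submatrix σ τ).det‖ = ‖((A.submatrix σ id).submatrix id τ).det‖ := rfl
    _ = ‖A.det‖ := by
      rw [Matrix.det_permute', norm_sign_mul, Matrix.det_permute, norm_sign_mul]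

end NormedRing

lemma eq_unipotent_mul_diagonal_mul_unipotent {R : Type*} [CommRing R]
    {g : Matrix (Fin 2) (Fin 2) R} (hg : g 1 1 = 1) :
    g = !![1, g 0 1; 0, 1] * Matrix.diagonal ![g.det, 1] * !![1, 0; g 1 0, 1] := by
  ext i j
  rw [Matrix.mul_apply, Fin.sum_univ_two, Matrix.mul_diagonal, Matrix.mul_diagonal]
  fin_cases i <;> fin_cases j <;> simp [Matrix.det_fin_two, hg]

section Padic

variable {p : ℕ} [Fact p.Prime] {n : ℕ}

lemma exists_eq_pow_mul_of_norm_le_one {d : ℚ_[p]} (hd : ‖d‖ ≤ 1)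
    (hdn : 1 ≤ (p : ℝ) ^ n * ‖d‖) :
    ∃ i ≤ n, ∃ u : ℚ_[p], ‖u‖ = 1 ∧ d = (p : ℚ_[p]) ^ i * u := by
  obtain ⟨d, rfl⟩ : ∃ d' : ℤ_[p], d = d' := ⟨⟨d, hd⟩, rfl⟩
  have hd₀ : d ≠ 0 := by
    rintro rfl
    norm_num at hdn
  refine ⟨d.valuation, ?_, PadicInt.unitCoeff hd₀, PadicInt.norm_units _, ?_⟩
  · have hp : (1 : ℝ) < p := mod_cast (Fact.out : p.Prime).one_lt
    rw [PadicInt.padic_norm_e_of_padicInt, PadicInt.norm_eq_zpow_neg_valuation hd₀, _root_.zpow_neg,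
      zpow_natCast, ← div_eq_mul_inv, one_le_div (by positivity)] at hdn
    exact (pow_le_pow_iff_right₀ hp).mp hdn
  · rw [mul_comm]
    simpa using congr_arg ((↑) : ℤ_[p] → ℚ_[p]) (PadicInt.unitCoeff_spec hd₀)

lemma mul_mem_Kgp {k₁ k₂ : Matrix (Fin 2) (Fin 2) ℚ_[p]} (h₁ : k₁ ∈ Kgp p) (h₂ : k₂ ∈ Kgp p) :
    k₁ * k₂ ∈ Kgp p :=
  ⟨norm_matrix_mul_apply_le_one h₁.1 h₂.1, by rw [Matrix.det_mul, norm_mul, h₁.2, h₂.2, one_mul]⟩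

lemma submatrix_perm_mem_Kgp {k : Matrix (Fin 2) (Fin 2) ℚ_[p]} (hk : k ∈ Kgp p)
    (σ τ : Equiv.Perm (Fin 2)) : k.submatrix σ τ ∈ Kgp p :=
  ⟨fun i j ↦ hk.1 (σ i) (τ j), (norm_det_submatrix_perm k σ τ).trans hk.2⟩

lemma upper_unipotent_mem_Kgp {b : ℚ_[p]} (hb : ‖b‖ ≤ 1) : !![1, b; 0, 1] ∈ Kgp p := by
  refine ⟨fun i j ↦ ?_, by simp⟩
  fin_cases i <;> fin_cases j <;> simp [hb]

lemma lower_unipotent_mem_Kgp {c : ℚ_[p]} (hc : ‖c‖ ≤ 1) : !![1, 0; c, 1] ∈ Kgp p := by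
  refine ⟨fun i j ↦ ?_, by simp⟩
  fin_cases i <;> fin_cases j <;> simp [hc]

lemma diagonal_mem_Kgp {u : ℚ_[p]} (hu : ‖u‖ = 1) : Matrix.diagonal ![u, 1] ∈ Kgp p :=
  ⟨norm_diagonal_apply_le_one (by simp [Fin.forall_fin_two, hu]), by simp [hu]⟩

lemma norm_apply_le_one_of_mem_Kn {g : Matrix (Fin 2) (Fin 2) ℚ_[p]} (hg : g ∈ Kn p n)
    (i j : Fin 2) : ‖g i j‖ ≤ 1 := by
  obtain ⟨e, -, k₁, h₁, k₂, h₂, rfl⟩ := hg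
  have norm_pow_le_one : ‖(p : ℚ_[p]) ^ e‖ ≤ 1 :=
    (norm_pow _ e).trans_le (pow_le_one₀ (norm_nonneg _) Padic.norm_p_lt_one.le)
  have norm_diagonal_le_one := norm_diagonal_apply_le_one (d := ![(p : ℚ_[p]) ^ e, 1])
    (Fin.forall_fin_two.mpr ⟨norm_pow_le_one, norm_one.le⟩)
  exact norm_matrix_mul_apply_le_one (norm_matrix_mul_apply_le_one h₁.1 norm_diagonal_le_one)
    h₂.1 i j

lemma one_le_pow_mul_norm_det_of_mem_Kn {g : Matrix (Fin 2) (Fin 2) ℚ_[p]} (hg : g ∈ Kn p n) :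
    1 ≤ (p : ℝ) ^ n * ‖g.det‖ := by
  obtain ⟨i, hi, k₁, h₁, k₂, h₂, rfl⟩ := hg
  have hp : (1 : ℝ) < p := mod_cast (Fact.out : p.Prime).one_lt
  have norm_det : ‖(k₁ * Matrix.diagonal ![(p : ℚ_[p]) ^ i, 1] * k₂).det‖ = ((p : ℝ) ^ i)⁻¹ := by
    simp [Matrix.det_mul, h₁.2, h₂.2]
  rw [norm_det, ← div_eq_mul_inv, one_le_div (by positivity)]
  exact pow_le_pow_right₀ hp.le hi

lemma mem_Kn_of_apply_one_one_eq_one {g : Matrix (Fin 2) (Fin 2) ℚ_[p]}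
    (hg : ∀ i j, ‖g i j‖ ≤ 1) (hg₁ : g 1 1 = 1) (hdet : 1 ≤ (p : ℝ) ^ n * ‖g.det‖) :
    g ∈ Kn p n := by
  obtain ⟨i, hi, u, hu, hd⟩ := exists_eq_pow_mul_of_norm_le_one (norm_det_le_one hg) hdet
  have diagonal_eq : Matrix.diagonal ![g.det, 1] =
      Matrix.diagonal ![(p : ℚ_[p]) ^ i, 1] * Matrix.diagonal ![u, 1] := by
    rw [Matrix.diagonal_mul_diagonal, hd]
    congr 1
    ext j
    fin_cases j <;> simp
  refine ⟨i, hi, _, upper_unipotent_mem_Kgp (hg 0 1), _,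
    mul_mem_Kgp (diagonal_mem_Kgp hu) (lower_unipotent_mem_Kgp (hg 1 0)), ?_⟩
  calc g = !![1, g 0 1; 0, 1] * Matrix.diagonal ![g.det, 1] * !![1, 0; g 1 0, 1] :=
        eq_unipotent_mul_diagonal_mul_unipotent hg₁
    _ = _ := by simp only [diagonal_eq, Matrix.mul_assoc]

lemma submatrix_perm_mem_ZKn {m : Matrix (Fin 2) (Fin 2) ℚ_[p]} (hm : m ∈ ZKn p n)
    (σ τ : Equiv.Perm (Fin 2)) : m.submatrix σ τ ∈ ZKn p n := by
  obtain ⟨z, hz, _, ⟨i, hi, k₁, h₁, k₂, h₂, rfl⟩, rfl⟩ := hm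
  exact ⟨z, hz, _, ⟨i, hi, _, submatrix_perm_mem_Kgp h₁ σ 1, _, submatrix_perm_mem_Kgp h₂ 1 τ,
    rfl⟩, rfl⟩

lemma submatrix_perm_mem_ZKn_iff {m : Matrix (Fin 2) (Fin 2) ℚ_[p]}
    (σ τ : Equiv.Perm (Fin 2)) : m.submatrix σ τ ∈ ZKn p n ↔ m ∈ ZKn p n :=
  ⟨fun h ↦ by simpa using submatrix_perm_mem_ZKn h σ.symm τ.symm,
    fun h ↦ submatrix_perm_mem_ZKn h σ τ⟩

lemma det_ne_zero_of_mem_ZKn {m : Matrix (Fin 2) (Fin 2) ℚ_[p]} (hm : m ∈ ZKn p n) :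
    m.det ≠ 0 := by
  obtain ⟨z, hz, g, hg, rfl⟩ := hm
  have hdet : g.det ≠ 0 := fun h ↦ by
    simpa [h] using (one_le_pow_mul_norm_det_of_mem_Kn hg).trans_lt' zero_lt_one
  simp [hz, hdet]

lemma norm_apply_sq_le_of_mem_ZKn {m : Matrix (Fin 2) (Fin 2) ℚ_[p]} (hm : m ∈ ZKn p n)
    (i j : Fin 2) : ‖m i j‖ ^ 2 ≤ (p : ℝ) ^ n * ‖m.det‖ := by
  obtain ⟨z, -, g, hg, rfl⟩ := hm
  calc ‖(z • g) i j‖ ^ 2 = ‖z‖ ^ 2 * ‖g i j‖ ^ 2 := by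
        rw [Matrix.smul_apply, smul_eq_mul, norm_mul, mul_pow]
    _ ≤ ‖z‖ ^ 2 * ((p : ℝ) ^ n * ‖g.det‖) := by
        gcongr
        exact (pow_le_one₀ (norm_nonneg _) (norm_apply_le_one_of_mem_Kn hg i j)).trans
          (one_le_pow_mul_norm_det_of_mem_Kn hg)
    _ = (p : ℝ) ^ n * ‖(z • g).det‖ := by
        rw [Matrix.det_smul, Fintype.card_fin, norm_mul, norm_pow]
        ring

lemma mem_ZKn_of_norm_apply_le {m : Matrix (Fin 2) (Fin 2) ℚ_[p]} (hm : m 1 1 ≠ 0)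
    (hmax : ∀ i j, ‖m i j‖ ≤ ‖m 1 1‖) (hdet : ‖m 1 1‖ ^ 2 ≤ (p : ℝ) ^ n * ‖m.det‖) :
    m ∈ ZKn p n := by
  have hpos : 0 < ‖m 1 1‖ := norm_pos_iff.mpr hm
  refine ⟨m 1 1, hm, (m 1 1)⁻¹ • m, mem_Kn_of_apply_one_one_eq_one (fun i j ↦ ?_) ?_ ?_,
    (smul_inv_smul₀ hm m).symm⟩
  · rw [Matrix.smul_apply, smul_eq_mul, norm_mul, norm_inv]
    exact inv_mul_le_one_of_le₀ (hmax i j) hpos.le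
  · exact inv_mul_cancel₀ hm
  · rw [Matrix.det_smul, Fintype.card_fin, norm_mul, norm_pow, norm_inv, inv_pow, mul_left_comm]
    exact (one_le_inv_mul₀ (pow_pos hpos 2)).mpr hdet

theorem mem_ZKn_iff_norm_apply_sq_le {m : Matrix (Fin 2) (Fin 2) ℚ_[p]} :
    m ∈ ZKn p n ↔ m.det ≠ 0 ∧ ∀ i j, ‖m i j‖ ^ 2 ≤ (p : ℝ) ^ n * ‖m.det‖ := by
  refine ⟨fun hm ↦ ⟨det_ne_zero_of_mem_ZKn hm, norm_apply_sq_le_of_mem_ZKn hm⟩,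
    fun ⟨hdet, hle⟩ ↦ ?_⟩
  obtain ⟨⟨i, j⟩, hmax⟩ := Finite.exists_max fun e : Fin 2 × Fin 2 ↦ ‖m e.1 e.2‖
  have hij : m i j ≠ 0 := by
    contrapose! hdet
    have hm : m = 0 := by
      ext k l
      exact norm_le_zero_iff.mp ((hmax (k, l)).trans (norm_eq_zero.mpr hdet).le)
    simp [hm]
  rw [← submatrix_perm_mem_ZKn_iff (Equiv.swap 1 i) (Equiv.swap 1 j)]
  apply mem_ZKn_of_norm_apply_le
  · simpa only [Matrix.submatrix_apply, Equiv.swap_apply_left] using hij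
  · intro k l
    simpa only [Matrix.submatrix_apply, Equiv.swap_apply_left] using hmax (_, _)
  · simpa only [norm_det_submatrix_perm, Matrix.submatrix_apply, Equiv.swap_apply_left]
      using hle i j

lemma upper_triangular_mem_ZKn_iff {a b : ℚ_[p]} :
    !![a, b; 0, 1] ∈ ZKn p n ↔
      1 ≤ (p : ℝ) ^ n * ‖a‖ ∧ ‖a‖ ≤ (p : ℝ) ^ n ∧ ‖b‖ ^ 2 ≤ (p : ℝ) ^ n * ‖a‖ := by
  have hdet : !![a, b; 0, 1].det = a := by simp
  rw [mem_ZKn_iff_norm_apply_sq_le, hdet]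
  rcases eq_or_ne a 0 with rfl | ha
  · norm_num
  have norm_sq_le_iff : ‖a‖ ^ 2 ≤ (p : ℝ) ^ n * ‖a‖ ↔ ‖a‖ ≤ (p : ℝ) ^ n := by
    rw [sq, mul_le_mul_iff_left₀ (norm_pos_iff.mpr ha)]
  have hnonneg : 0 ≤ (p : ℝ) ^ n * ‖a‖ := by positivity
  simp only [ne_eq, ha, not_false_eq_true, of_apply, cons_val', cons_val_fin_one,
    Fin.forall_fin_two, cons_val_zero, cons_val_one, norm_sq_le_iff, norm_zero,
    OfNat.ofNat_ne_zero, zero_pow, hnonneg, norm_one, one_pow, true_and]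
  tauto

end Padic

/-- `[[y₂⁻¹y₁, y₂⁻¹x],[0,1]] ∈ Z·K_n` if and only if
`p^{−n} ≤ |y₂⁻¹y₁|_p ≤ p^{n}` and `|x|_p² ≤ p^{n}·|y₁y₂|_p`. -/
theorem mem_ZKn_iff (p : ℕ) [Fact p.Prime] (n : ℕ) (y₁ y₂ x : ℚ_[p])
    (hy₁ : y₁ ≠ 0) (hy₂ : y₂ ≠ 0) :
    !![y₂⁻¹ * y₁, y₂⁻¹ * x; 0, 1] ∈ ZKn p n ↔
      ((p : ℝ) ^ (-(n : ℤ)) ≤ ‖y₂⁻¹ * y₁‖ ∧ ‖y₂⁻¹ * y₁‖ ≤ (p : ℝ) ^ (n : ℤ) ∧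
        ‖x‖ ^ 2 ≤ (p : ℝ) ^ (n : ℤ) * ‖y₁ * y₂‖) := by
  have hp : (0 : ℝ) < p := mod_cast (Fact.out : p.Prime).pos
  have lower_bound_iff : 1 ≤ (p : ℝ) ^ n * ‖y₂⁻¹ * y₁‖ ↔
      (p : ℝ) ^ (-(n : ℤ)) ≤ ‖y₂⁻¹ * y₁‖ := by
    rw [_root_.zpow_neg, zpow_natCast, inv_le_iff_one_le_mul₀' (pow_pos hp n)]
  have norm_sq_le_iff : ‖y₂⁻¹ * x‖ ^ 2 ≤ (p : ℝ) ^ n * ‖y₂⁻¹ * y₁‖ ↔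
      ‖x‖ ^ 2 ≤ (p : ℝ) ^ n * ‖y₁ * y₂‖ := by
    rw [← mul_le_mul_iff_right₀ (pow_pos (norm_pos_iff.mpr hy₂) 2)]
    simp only [norm_mul, norm_inv]
    field_simp
  rw [upper_triangular_mem_ZKn_iff, lower_bound_iff, norm_sq_le_iff, zpow_natCast]
end
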